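/- Define h : ℤ → ℤ by h(i) = (i+1)(i+2)/2 for i ≥ 0 and h(i) = 0 for i < 0. For all integers s and d with s ≥ 1, s + 3 < 2d, and d ≤ s + 1, setting u = ⌊(s + d)/2⌋, one has h(u) − 5·h(u − d) > 4·h(s − u). -/

import Mathlib

/-- The Hilbert function of the polynomial ring `k[X₁, X₂, X₃]`:
`h i = (i+1)(i+2)/2` for `i ≥ 0` and `h i = 0` for `i < 0`. -/
def h (i : ℤ) : ℤ := if 0 ≤ i then (i + 1) * (i + 2) / 2 else 0

theorem two_h (i : ℤ) (hi : -1 ≤ i) : 2 * h i = (i + 1) * (i + 2) := by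
  unfold h
  split_ifs with h0
  · have : (2 : ℤ) ∣ (i + 1) * (i + 2) := by
      have := Int.even_mul_succ_self (i + 1)
      rw [show i + 1 + 1 = i + 2 by ring] at this
      exact this.two_dvd
    omega
  · have : i = -1 := by omega
    subst this
    norm_num

/-- **Key estimate in Case 2 of Proposition 3.3.** For all integers `s` and `d` with
`s ≥ 1`, `s + 3 < 2d`, and `d ≤ s + 1`, setting `u = ⌊(s+d)/2⌋`, one has
`h(u) − 5·h(u−d) > 4·h(s−u)`. -/
theorem stmt_19 (s d : ℤ) (hs : 1 ≤ s) (hsd : s + 3 < 2 * d) (hds : d ≤ s + 1)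
    (u : ℤ) (hu : u = ⌊((s : ℚ) + (d : ℚ)) / 2⌋) :
    h u - 5 * h (u - d) > 4 * h (s - u) := by
  have h1 : 2 * u ≤ s + d ∧ s + d < 2 * u + 2 := by
    have e := (Int.floor_eq_iff.mp hu.symm)
    obtain ⟨e1, e2⟩ := e
    constructor
    · have : (2 : ℚ) * u ≤ s + d := by linarith
      exact_mod_cast this
    · have : (s : ℚ) + d < 2 * u + 2 := by linarith
      exact_mod_cast this
  obtain ⟨h1, h2⟩ := h1
  have A := two_h u (by omega)
  have B := two_h (u - d) (by omega)
  have C := two_h (s - u) (by omega)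
  obtain ⟨a, ha⟩ : ∃ a, a = u - d := ⟨_, rfl⟩
  rw [← ha] at B ⊢
  have ha1 : -1 ≤ a := by omega
  have hcase : s - u = a ∨ s - u = a + 1 := by omega
  rcases hcase with hc | hc
  · rw [hc] at C ⊢
    have hu3 : 3 * a + 4 ≤ u := by omega
    have ha0 : 0 ≤ a := by omega
    nlinarith [mul_self_nonneg (u - (3 * a + 4)), mul_nonneg ha0 (sub_nonneg.mpr hu3)]
  · rw [hc] at C ⊢
    have hu3 : 3 * a + 5 ≤ u := by omega
    have : (3 * a + 6) * (3 * a + 7) ≤ (u + 1) * (u + 2) := by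
      nlinarith [mul_self_nonneg (u - (3 * a + 5)), mul_nonneg (by omega : 0 ≤ a + 1) (sub_nonneg.mpr hu3)]
    nlinarith
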